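/- Let μ ∈ (0,1]. There is a constant C, independent of μ, such that for every λ > 0, every t ∈ ℝ \ {0} and every Schwartz function f on ℝ, ‖S_{μ,1}(t) P_λ f‖_{L^∞(ℝ)} ≤ C μ^{-1/2} |t|^{-1/2} λ^{-1/2} ⟨√μ λ⟩^{5/4} ‖f‖_{L^1(ℝ)}. -/

import Mathlib

noncomputable section

open MeasureTheory SchwartzMap
open scoped FourierTransform ENNReal

/-- The Japanese bracket `⟨x⟩ = (1 + x²)^{1/2}`. -/
def jap (x : ℝ) : ℝ := (1 + x ^ 2) ^ ((1 : ℝ) / 2)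

/-- The symbol `m₁(ξ) = ξ (tanh|ξ|/|ξ|)^{1/2}`, with `m₁(0) = 0`. -/
def m1 (ξ : ℝ) : ℝ :=
  if ξ = 0 then 0 else ξ * Real.sqrt (Real.tanh |ξ| / |ξ|)

/-- The propagator `S_{μ,1}(t) f = (e^{i(t/√μ) m₁(√μ ξ)} f̂(ξ))^∨`. -/
def prop1 (μ t : ℝ) (f : ℝ → ℂ) : ℝ → ℂ :=
  𝓕⁻ (fun ξ : ℝ =>
    Complex.exp (Complex.I * ((t / Real.sqrt μ) * m1 (Real.sqrt μ * ξ) : ℝ)) * 𝓕 f ξ)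

/-- The Littlewood–Paley projection `P_λ`, `(P_λ f)^(ξ) = β(|ξ|/λ) f̂(ξ)`,
where `β(s) = χ(s) - χ(2s)`. -/
def proj1 (χ : ℝ → ℝ) (lam : ℝ) (f : ℝ → ℂ) : ℝ → ℂ :=
  𝓕⁻ (fun ξ : ℝ => ((χ (|ξ| / lam) - χ (2 * |ξ| / lam) : ℝ) : ℂ) * 𝓕 f ξ)


lemma vc_norm_exp (r : ℝ) : ‖Complex.exp (Complex.I * (r : ℂ))‖ = 1 := by
  rw [mul_comm]; exact Complex.norm_exp_ofReal_mul_I r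

/-- first derivative test -/
lemma vc_one {a b κ : ℝ} (hab : a ≤ b) (hκ : 0 < κ) {φ φ1 φ2 : ℝ → ℝ}
    (h1 : ∀ x ∈ Set.Icc a b, HasDerivAt φ (φ1 x) x)
    (h2 : ∀ x ∈ Set.Icc a b, HasDerivAt φ1 (φ2 x) x)
    (hc : ContinuousOn φ2 (Set.Icc a b))
    (hpos : ∀ x ∈ Set.Icc a b, 0 ≤ φ2 x)
    (hlow : ∀ x ∈ Set.Icc a b, κ ≤ φ1 x) :
    ‖∫ x in a..b, Complex.exp (Complex.I * (φ x : ℂ))‖ ≤ 2 / κ := by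
  have huI : Set.uIcc a b = Set.Icc a b := Set.uIcc_of_le hab
  have hp : ∀ x ∈ Set.Icc a b, 0 < φ1 x := fun x hx => hκ.trans_le (hlow x hx)
  have hφc : ContinuousOn φ (Set.Icc a b) := fun x hx => (h1 x hx).continuousAt.continuousWithinAt
  have hcont_one : ContinuousOn φ1 (Set.Icc a b) :=
    fun x hx => (h2 x hx).continuousAt.continuousWithinAt
  have hec : ContinuousOn (fun x => Complex.exp (Complex.I * (φ x : ℂ))) (Set.Icc a b) := by
    fun_prop
  have hqc : ContinuousOn (fun x => φ2 x / (φ1 x) ^ 2) (Set.Icc a b) :=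
    hc.div (hcont_one.pow 2) (fun x hx => (pow_pos (hp x hx) 2).ne')
  have hqcC : ContinuousOn (fun x => Complex.I * Complex.exp (Complex.I * (φ x : ℂ)) *
      ((φ2 x / (φ1 x) ^ 2 : ℝ) : ℂ)) (Set.Icc a b) := by
    have : ContinuousOn (fun x => ((φ2 x / (φ1 x) ^ 2 : ℝ) : ℂ)) (Set.Icc a b) :=
      Complex.continuous_ofReal.comp_continuousOn hqc
    exact (continuousOn_const.mul hec).mul this
  have hF : ∀ x ∈ Set.uIcc a b, HasDerivAt
      (fun x => -Complex.I * Complex.exp (Complex.I * (φ x : ℂ)) / (φ1 x : ℂ))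
      (Complex.exp (Complex.I * (φ x : ℂ)) + Complex.I * Complex.exp (Complex.I * (φ x : ℂ)) *
      ((φ2 x / (φ1 x) ^ 2 : ℝ) : ℂ)) x := by
    intro x hx
    rw [huI] at hx
    have hne : (φ1 x : ℂ) ≠ 0 := by exact_mod_cast (hp x hx).ne'
    have e1 := (((h1 x hx).ofReal_comp.const_mul Complex.I).cexp.const_mul (-Complex.I)).div
      (h2 x hx).ofReal_comp hne
    refine HasDerivAt.congr_deriv e1 ?_
    push_cast
    field_simp
    linear_combination (-((φ1 x : ℂ) ^ 2)) * Complex.I_sq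
  have hint := intervalIntegral.integral_eq_sub_of_hasDerivAt hF
    (((hec.add hqcC)).intervalIntegrable_of_Icc hab)
  rw [intervalIntegral.integral_add (hec.intervalIntegrable_of_Icc hab)
    (hqcC.intervalIntegrable_of_Icc hab)] at hint
  have hG : ∀ x ∈ Set.uIcc a b, HasDerivAt (fun x => -(φ1 x)⁻¹) (φ2 x / (φ1 x) ^ 2) x := by
    intro x hx
    rw [huI] at hx
    refine HasDerivAt.congr_deriv ((h2 x hx).inv (hp x hx).ne').neg ?_
    ring
  have hintG := intervalIntegral.integral_eq_sub_of_hasDerivAt hG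
    (hqc.intervalIntegrable_of_Icc hab)
  have hbd : ‖∫ x in a..b, Complex.I * Complex.exp (Complex.I * (φ x : ℂ)) *
      ((φ2 x / (φ1 x) ^ 2 : ℝ) : ℂ)‖ ≤ ∫ x in a..b, φ2 x / (φ1 x) ^ 2 := by
    apply intervalIntegral.norm_integral_le_of_norm_le hab _ (hqc.intervalIntegrable_of_Icc hab)
    refine Filter.Eventually.of_forall fun x hx => ?_
    have hx' := Set.Ioc_subset_Icc_self hx
    rw [norm_mul, norm_mul, vc_norm_exp, Complex.norm_I, Complex.norm_real, Real.norm_eq_abs,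
      abs_of_nonneg (div_nonneg (hpos x hx') (sq_nonneg _))]
    simp
  have hend : ∀ x ∈ Set.Icc a b,
      ‖-Complex.I * Complex.exp (Complex.I * (φ x : ℂ)) / (φ1 x : ℂ)‖ = (φ1 x)⁻¹ := by
    intro x hx
    rw [norm_div, norm_mul, vc_norm_exp, norm_neg, Complex.norm_I, Complex.norm_real,
      Real.norm_eq_abs, abs_of_pos (hp x hx)]
    simp
  have ha : a ∈ Set.Icc a b := Set.left_mem_Icc.2 hab
  have hb : b ∈ Set.Icc a b := Set.right_mem_Icc.2 hab
  rw [← eq_sub_iff_add_eq] at hint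
  rw [hint]
  have k1 : (φ1 a)⁻¹ ≤ κ⁻¹ := inv_anti₀ hκ (hlow a ha)
  have n1 := norm_sub_le ((-Complex.I * Complex.exp (Complex.I * (φ b : ℂ)) / (φ1 b : ℂ)) -
    (-Complex.I * Complex.exp (Complex.I * (φ a : ℂ)) / (φ1 a : ℂ)))
    (∫ x in a..b, Complex.I * Complex.exp (Complex.I * (φ x : ℂ)) *
      ((φ2 x / (φ1 x) ^ 2 : ℝ) : ℂ))
  have n2 := norm_sub_le (-Complex.I * Complex.exp (Complex.I * (φ b : ℂ)) / (φ1 b : ℂ))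
    (-Complex.I * Complex.exp (Complex.I * (φ a : ℂ)) / (φ1 a : ℂ))
  rw [hend a ha, hend b hb] at n2
  have : 2 / κ = 2 * κ⁻¹ := by ring
  linarith

lemma vc_triv {a b : ℝ} (hab : a ≤ b) (φ : ℝ → ℝ) :
    ‖∫ x in a..b, Complex.exp (Complex.I * (φ x : ℂ))‖ ≤ b - a := by
  have := intervalIntegral.norm_integral_le_of_norm_le_const (a := a) (b := b) (C := 1)
    (f := fun x => Complex.exp (Complex.I * (φ x : ℂ))) (fun x _ => (vc_norm_exp _).le)
  rwa [one_mul, abs_of_nonneg (by linarith)] at this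

/-- one-sided second derivative test -/
lemma vc_two_right {a b κ : ℝ} (hab : a ≤ b) (hκ : 0 < κ) {φ φ1 φ2 : ℝ → ℝ}
    (h1 : ∀ x ∈ Set.Icc a b, HasDerivAt φ (φ1 x) x)
    (h2 : ∀ x ∈ Set.Icc a b, HasDerivAt φ1 (φ2 x) x)
    (hc : ContinuousOn φ2 (Set.Icc a b))
    (hlow : ∀ x ∈ Set.Icc a b, κ ≤ φ2 x) (h0 : 0 ≤ φ1 a) :
    ‖∫ x in a..b, Complex.exp (Complex.I * (φ x : ℂ))‖ ≤ 3 / √κ := by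
  have hs : 0 < √κ := Real.sqrt_pos.2 hκ
  have hss : √κ * √κ = κ := Real.mul_self_sqrt hκ.le
  have hd : 0 < 1 / √κ := by positivity
  have e3 : 3 / √κ = 1 / √κ + 2 / √κ := by ring
  have e2 : 0 < 2 / √κ := by positivity
  rcases le_total b (a + 1 / √κ) with hb | hb
  · have := vc_triv hab φ
    linarith
  · have hφc : ContinuousOn φ (Set.Icc a b) :=
      fun x hx => (h1 x hx).continuousAt.continuousWithinAt
    have hec : ContinuousOn (fun x => Complex.exp (Complex.I * (φ x : ℂ))) (Set.Icc a b) := by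
      fun_prop
    have hsub1 : Set.Icc a (a + 1 / √κ) ⊆ Set.Icc a b := Set.Icc_subset_Icc_right hb
    have hsub2 : Set.Icc (a + 1 / √κ) b ⊆ Set.Icc a b := Set.Icc_subset_Icc_left (by linarith)
    rw [← intervalIntegral.integral_add_adjacent_intervals
      ((hec.mono hsub1).intervalIntegrable_of_Icc (by linarith))
      ((hec.mono hsub2).intervalIntegrable_of_Icc hb)]
    have t1 := vc_triv (show a ≤ a + 1 / √κ by linarith) φ
    have t2 := vc_one hb hs (fun x hx => h1 x (hsub2 hx)) (fun x hx => h2 x (hsub2 hx))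
      (hc.mono hsub2) (fun x hx => hκ.le.trans (hlow x (hsub2 hx))) (by
        intro x hx
        have hax : a ≤ x := (hsub2 hx).1
        have key := (convex_Icc a b).mul_sub_le_image_sub_of_le_deriv (f := φ1) (C := κ)
          (fun y hy => (h2 y hy).continuousAt.continuousWithinAt)
          (fun y hy => (h2 y (interior_subset hy)).differentiableAt.differentiableWithinAt)
          (fun y hy => by rw [(h2 y (interior_subset hy)).deriv]; exact hlow y (interior_subset hy))
          a (Set.left_mem_Icc.2 hab) x (hsub2 hx) hax
        have : κ * (1 / √κ) ≤ κ * (x - a) := by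
          apply mul_le_mul_of_nonneg_left _ hκ.le
          linarith [hx.1]
        have h' : κ * (1 / √κ) = √κ := by
          rw [mul_one_div, div_eq_iff hs.ne', hss]
        linarith)
    refine (norm_add_le _ _).trans ?_
    linarith

lemma vc_two_left {a b κ : ℝ} (hab : a ≤ b) (hκ : 0 < κ) {φ φ1 φ2 : ℝ → ℝ}
    (h1 : ∀ x ∈ Set.Icc a b, HasDerivAt φ (φ1 x) x)
    (h2 : ∀ x ∈ Set.Icc a b, HasDerivAt φ1 (φ2 x) x)
    (hc : ContinuousOn φ2 (Set.Icc a b))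
    (hlow : ∀ x ∈ Set.Icc a b, κ ≤ φ2 x) (h0 : φ1 b ≤ 0) :
    ‖∫ x in a..b, Complex.exp (Complex.I * (φ x : ℂ))‖ ≤ 3 / √κ := by
  have hm : ∀ x ∈ Set.Icc (-b) (-a), -x ∈ Set.Icc a b := fun x hx =>
    ⟨by linarith [hx.2], by linarith [hx.1]⟩
  have := vc_two_right (a := -b) (b := -a) (by linarith) hκ (φ := fun x => φ (-x))
    (φ1 := fun x => - φ1 (-x)) (φ2 := fun x => φ2 (-x))
    (fun x hx => by
      have := (h1 _ (hm x hx)).comp x (hasDerivAt_neg x)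
      simpa [Function.comp_def] using this)
    (fun x hx => by
      have := ((h2 _ (hm x hx)).comp x (hasDerivAt_neg x)).neg
      simpa [Function.comp_def] using! this)
    (hc.comp continuousOn_neg hm)
    (fun x hx => hlow _ (hm x hx)) (by simpa using h0)
  rwa [intervalIntegral.integral_comp_neg (fun x => Complex.exp (Complex.I * (φ x : ℂ))),
    neg_neg, neg_neg] at this

lemma vc_two {a b κ : ℝ} (hab : a ≤ b) (hκ : 0 < κ) {φ φ1 φ2 : ℝ → ℝ}
    (h1 : ∀ x ∈ Set.Icc a b, HasDerivAt φ (φ1 x) x)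
    (h2 : ∀ x ∈ Set.Icc a b, HasDerivAt φ1 (φ2 x) x)
    (hc : ContinuousOn φ2 (Set.Icc a b))
    (hlow : ∀ x ∈ Set.Icc a b, κ ≤ φ2 x) :
    ‖∫ x in a..b, Complex.exp (Complex.I * (φ x : ℂ))‖ ≤ 6 / √κ := by
  have hs : 0 < √κ := Real.sqrt_pos.2 hκ
  have e6 : 6 / √κ = 3 / √κ + 3 / √κ := by ring
  have e3 : 0 < 3 / √κ := by positivity
  rcases le_total 0 (φ1 a) with ha | ha
  · have := vc_two_right hab hκ h1 h2 hc hlow ha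
    linarith
  rcases le_total (φ1 b) 0 with hb | hb
  · have := vc_two_left hab hκ h1 h2 hc hlow hb
    linarith
  have hcont_one : ContinuousOn φ1 (Set.Icc a b) :=
    fun x hx => (h2 x hx).continuousAt.continuousWithinAt
  obtain ⟨c, hcI, hc0⟩ := intermediate_value_Icc hab hcont_one (show (0 : ℝ) ∈ Set.Icc _ _ from ⟨ha, hb⟩)
  have hφc : ContinuousOn φ (Set.Icc a b) :=
    fun x hx => (h1 x hx).continuousAt.continuousWithinAt
  have hec : ContinuousOn (fun x => Complex.exp (Complex.I * (φ x : ℂ))) (Set.Icc a b) := by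
    fun_prop
  have hsub1 : Set.Icc a c ⊆ Set.Icc a b := Set.Icc_subset_Icc_right hcI.2
  have hsub2 : Set.Icc c b ⊆ Set.Icc a b := Set.Icc_subset_Icc_left hcI.1
  rw [← intervalIntegral.integral_add_adjacent_intervals
      ((hec.mono hsub1).intervalIntegrable_of_Icc hcI.1)
      ((hec.mono hsub2).intervalIntegrable_of_Icc hcI.2)]
  have t1 := vc_two_left hcI.1 hκ (fun x hx => h1 x (hsub1 hx)) (fun x hx => h2 x (hsub1 hx))
    (hc.mono hsub1) (fun x hx => hlow x (hsub1 hx)) hc0.le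
  have t2 := vc_two_right hcI.2 hκ (fun x hx => h1 x (hsub2 hx)) (fun x hx => h2 x (hsub2 hx))
    (hc.mono hsub2) (fun x hx => hlow x (hsub2 hx)) hc0.ge
  refine (norm_add_le _ _).trans ?_
  linarith

/-- second derivative test with amplitude vanishing at the right end -/
lemma vc_amp {a b κ D : ℝ} (hab : a ≤ b) (hκ : 0 < κ) {φ φ1 φ2 ψ ψ1 : ℝ → ℝ}
    (h1 : ∀ x ∈ Set.Icc a b, HasDerivAt φ (φ1 x) x)
    (h2 : ∀ x ∈ Set.Icc a b, HasDerivAt φ1 (φ2 x) x)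
    (hc : ContinuousOn φ2 (Set.Icc a b))
    (hlow : ∀ x ∈ Set.Icc a b, κ ≤ φ2 x)
    (hψ : ∀ x, HasDerivAt ψ (ψ1 x) x)
    (hψc : Continuous ψ1) (hψD : ∀ x, |ψ1 x| ≤ D) (hψb : ψ b = 0) :
    ‖∫ x in a..b, Complex.exp (Complex.I * (φ x : ℂ)) * (ψ x : ℂ)‖
      ≤ 6 / √κ * D * (b - a) := by
  have huI : Set.uIcc a b = Set.Icc a b := Set.uIcc_of_le hab
  have hφc : ContinuousOn φ (Set.Icc a b) :=
    fun x hx => (h1 x hx).continuousAt.continuousWithinAt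
  have hec : ContinuousOn (fun x => Complex.exp (Complex.I * (φ x : ℂ))) (Set.Icc a b) := by
    fun_prop
  set E := fun x => Complex.exp (Complex.I * (φ x : ℂ)) with hE
  have hEi : IntervalIntegrable E volume a b := hec.intervalIntegrable_of_Icc hab
  set F : ℝ → ℂ := fun x => ∫ y in a..x, E y with hF
  have hFc : ContinuousOn F (Set.uIcc a b) :=
    intervalIntegral.continuousOn_primitive_interval' hEi Set.left_mem_uIcc
  have hFd : ∀ x ∈ Set.Ioo (min a b) (max a b), HasDerivAt F (E x) x := by
    intro x hx
    rw [min_eq_left hab, max_eq_right hab] at hx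
    have hx' := Set.Ioo_subset_Icc_self hx
    have hca : ContinuousOn E (Set.Ioo a b) := hec.mono Set.Ioo_subset_Icc_self
    exact intervalIntegral.integral_hasDerivAt_right
      ((hec.mono (Set.Icc_subset_Icc_right hx'.2)).intervalIntegrable_of_Icc hx'.1)
      (hca.stronglyMeasurableAtFilter isOpen_Ioo x hx)
      (hca.continuousAt (isOpen_Ioo.mem_nhds hx))
  have hψC : Continuous fun x => (ψ x : ℂ) :=
    Complex.continuous_ofReal.comp
      (continuous_iff_continuousAt.2 fun x => (hψ x).continuousAt)
  have hcont_amp : Continuous fun x => (ψ1 x : ℂ) := Complex.continuous_ofReal.comp hψc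
  have parts := intervalIntegral.integral_mul_deriv_eq_deriv_mul_of_hasDerivAt
    (u := fun x => (ψ x : ℂ)) (v := F) (u' := fun x => (ψ1 x : ℂ)) (v' := E)
    (a := a) (b := b) hψC.continuousOn hFc
    (fun x _ => (hψ x).ofReal_comp) hFd (hcont_amp.intervalIntegrable _ _) hEi
  have hcomm : ∫ x in a..b, E x * (ψ x : ℂ) = ∫ x in a..b, (ψ x : ℂ) * E x := by
    simp_rw [mul_comm]
  rw [hcomm, parts, hψb]
  have hFa : F a = 0 := by simp [hF]
  rw [hFa]
  simp only [Complex.ofReal_zero, zero_mul, mul_zero, sub_zero, zero_sub, norm_neg]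
  have hD0 : 0 ≤ D := (abs_nonneg _).trans (hψD a)
  have hbd := intervalIntegral.norm_integral_le_of_norm_le_const (a := a) (b := b)
    (C := 6 / √κ * D) (f := fun x => (ψ1 x : ℂ) * F x) (by
      intro x hx
      rw [Set.uIoc_of_le hab] at hx
      have hsub : Set.Icc a x ⊆ Set.Icc a b := Set.Icc_subset_Icc_right hx.2
      have := vc_two hx.1.le hκ (fun x hx => h1 x (hsub hx)) (fun x hx => h2 x (hsub hx))
        (hc.mono hsub) (fun x hx => hlow x (hsub hx))
      rw [norm_mul, Complex.norm_real, Real.norm_eq_abs, mul_comm]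
      exact mul_le_mul this (hψD x) (abs_nonneg _) (by positivity))
  rwa [abs_of_nonneg (by linarith : 0 ≤ b - a)] at hbd

lemma hasDerivAt_tanh' (x : ℝ) : HasDerivAt Real.tanh (1 - Real.tanh x ^ 2) x := by
  have h := (Real.hasDerivAt_sinh x).div (Real.hasDerivAt_cosh x) (Real.cosh_pos x).ne'
  have he : Real.tanh = fun y => Real.sinh y / Real.cosh y := by
    funext y; exact Real.tanh_eq_sinh_div_cosh y
  rw [he]
  refine HasDerivAt.congr_deriv h ?_
  have := (Real.cosh_pos x).ne'
  field_simp

lemma tanh_pos' {x : ℝ} (hx : 0 < x) : 0 < Real.tanh x := by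
  rw [Real.tanh_eq_sinh_div_cosh]
  exact div_pos (Real.sinh_pos_iff.2 hx) (Real.cosh_pos x)

lemma sech_sq (x : ℝ) : 1 - Real.tanh x ^ 2 = 1 / Real.cosh x ^ 2 := by
  rw [Real.tanh_eq_sinh_div_cosh]
  have := (Real.cosh_pos x).ne'
  have h2 := Real.cosh_sq x
  field_simp
  linarith

def mG (x : ℝ) : ℝ := x * Real.tanh x

def mA (x : ℝ) : ℝ := (Real.tanh x + x * (1 - Real.tanh x ^ 2)) / (2 * √(mG x))

def mB (x : ℝ) : ℝ := -((Real.tanh x - x * (1 - Real.tanh x ^ 2)) ^ 2 +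
  4 * x ^ 2 * Real.tanh x ^ 2 * (1 - Real.tanh x ^ 2)) / (4 * mG x * √(mG x))

lemma mG_pos {x : ℝ} (hx : 0 < x) : 0 < mG x := mul_pos hx (tanh_pos' hx)

lemma m1_pos {x : ℝ} (hx : 0 < x) : m1 x = √(mG x) := by
  rw [m1, if_neg hx.ne', abs_of_pos hx, mG]
  have : x * Real.tanh x = x ^ 2 * (Real.tanh x / x) := by field_simp
  rw [this, Real.sqrt_mul (sq_nonneg x), Real.sqrt_sq hx.le]

lemma m1_neg (x : ℝ) : m1 (-x) = - m1 x := by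
  unfold m1
  by_cases h : x = 0 <;> simp [h]

lemma hasDerivAt_mG (x : ℝ) :
    HasDerivAt mG (Real.tanh x + x * (1 - Real.tanh x ^ 2)) x := by
  refine HasDerivAt.congr_deriv ((hasDerivAt_id x).mul (hasDerivAt_tanh' x)) ?_
  simp

lemma hasDerivAt_m1 {x : ℝ} (hx : 0 < x) : HasDerivAt m1 (mA x) x := by
  have h := (hasDerivAt_mG x).sqrt (mG_pos hx).ne'
  refine h.congr_of_eventuallyEq ?_
  filter_upwards [lt_mem_nhds hx] with y hy using m1_pos hy

lemma hasDerivAt_mA {x : ℝ} (hx : 0 < x) : HasDerivAt mA (mB x) x := by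
  have hg := mG_pos hx
  have hs : 0 < √(mG x) := Real.sqrt_pos.2 hg
  have hT := hasDerivAt_tanh' x
  have h1 := (hT.add ((hasDerivAt_id x).mul ((hT.pow 2).const_sub 1))).div
    (((hasDerivAt_mG x).sqrt hg.ne').const_mul 2) (by positivity)
  refine HasDerivAt.congr_deriv h1 ?_
  have hss : √(mG x) ^ 2 = mG x := Real.sq_sqrt hg.le
  have hss3 : 4 * mG x * √(mG x) = 4 * √(mG x) ^ 3 := by rw [← hss]; simp; ring
  have hGd : √(mG x) ^ 2 = x * Real.tanh x := hss
  unfold mB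
  rw [hss3]
  simp only [Pi.add_apply, Pi.mul_apply, Pi.pow_apply, id]
  generalize √(mG x) = s at *
  generalize Real.tanh x = T at *
  push_cast
  field_simp
  rw [hGd]
  ring

lemma continuousOn_mB : ContinuousOn mB (Set.Ioi 0) := by
  have hT : Continuous Real.tanh :=
    continuous_iff_continuousAt.2 fun x => (hasDerivAt_tanh' x).continuousAt
  have hG : Continuous mG := continuous_id.mul hT
  unfold mB
  apply ContinuousOn.div
  · fun_prop
  · fun_prop
  · intro x hx
    have hg := mG_pos hx
    have hs : 0 < √(mG x) := Real.sqrt_pos.2 hg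
    positivity

lemma mB_lower : ∃ c : ℝ, 0 < c ∧ ∀ x : ℝ, 0 < x → c * (x * (1 + x ^ 2) ^ (-(5 : ℝ) / 4)) ≤ - mB x := by
  have hC1 : 0 < Real.cosh 1 := Real.cosh_pos 1
  refine ⟨min (1 / Real.cosh 1 ^ 3) (1 / 4 * ((1 - 1 / Real.cosh 1 ^ 2) * (1 - 1 / Real.cosh 1)) ^ 2),
    ?_, ?_⟩
  · have h1 : 1 < Real.cosh 1 := Real.one_lt_cosh.2 one_ne_zero
    have h2 : 1 / Real.cosh 1 ^ 2 < 1 := by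
      rw [div_lt_one (by positivity)]; nlinarith
    have h3 : 1 / Real.cosh 1 < 1 := by
      rw [div_lt_one (by positivity)]; exact h1
    have := mul_pos (sub_pos.2 h2) (sub_pos.2 h3)
    apply lt_min <;> positivity
  intro x hx
  have hg := mG_pos hx
  have hs : 0 < √(mG x) := Real.sqrt_pos.2 hg
  have hss : √(mG x) ^ 2 = mG x := Real.sq_sqrt hg.le
  have hT := tanh_pos' hx
  have hT1 := Real.tanh_lt_one x
  have hS := sech_sq x
  have hC : 0 < Real.cosh x := Real.cosh_pos x
  have hSpos : 0 < 1 - Real.tanh x ^ 2 := by rw [hS]; positivity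
  have hsinh : x ≤ Real.sinh x := Real.self_le_sinh_iff.2 hx.le
  have hTx : x / Real.cosh x ≤ Real.tanh x := by
    rw [Real.tanh_eq_sinh_div_cosh]; gcongr
  have hJ1 : (1 + x ^ 2) ^ (-(5 : ℝ) / 4) ≤ 1 :=
    Real.rpow_le_one_of_one_le_of_nonpos (by nlinarith) (by norm_num)
  have hJ0 : 0 < (1 + x ^ 2) ^ (-(5 : ℝ) / 4) := by positivity
  rcases le_total x 1 with h1 | h1
  · have hCC : Real.cosh x ≤ Real.cosh 1 := by
      rw [Real.cosh_le_cosh, abs_of_pos hx, abs_one]; exact h1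
    calc _ ≤ 1 / Real.cosh 1 ^ 3 * (x * 1) := by
          gcongr; exact min_le_left _ _
      _ = (x / Real.cosh 1) * (1 / Real.cosh 1 ^ 2) := by field_simp
      _ ≤ √(mG x) * (1 - Real.tanh x ^ 2) := by
          have hone : 1 ≤ Real.cosh 1 := Real.one_le_cosh 1
          have a1 : x / Real.cosh 1 ≤ √(mG x) := by
            apply Real.le_sqrt_of_sq_le
            have b1 : x / Real.cosh 1 ≤ Real.tanh x :=
              le_trans (by gcongr) hTx
            have b2 : x / Real.cosh 1 ≤ x := div_le_self hx.le hone
            rw [sq, mG]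
            exact mul_le_mul b2 b1 (by positivity) hx.le
          rw [hS]
          gcongr
      _ = (4 * x ^ 2 * Real.tanh x ^ 2 * (1 - Real.tanh x ^ 2)) / (4 * mG x * √(mG x)) := by
          have : 4 * x ^ 2 * Real.tanh x ^ 2 = 4 * mG x * (√(mG x) * √(mG x)) := by
            rw [← sq, hss, mG]; ring
          rw [this]; field_simp
      _ ≤ - mB x := by
          unfold mB
          rw [← neg_div, neg_neg]
          gcongr
          nlinarith [sq_nonneg (Real.tanh x - x * (1 - Real.tanh x ^ 2))]
  · have hCC : Real.cosh 1 ≤ Real.cosh x := by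
      rw [Real.cosh_le_cosh, abs_of_pos hx, abs_one]; exact h1
    have hone : 1 ≤ Real.cosh 1 := Real.one_le_cosh 1
    have hsx : 0 < √x := Real.sqrt_pos.2 hx
    have d1 : (1 - 1 / Real.cosh 1 ^ 2) * (1 - 1 / Real.cosh 1) ≤
        Real.tanh x - x * (1 - Real.tanh x ^ 2) := by
      have q1 : 1 - 1 / Real.cosh 1 ^ 2 ≤ Real.tanh x := by
        have : 1 / Real.cosh x ^ 2 ≤ 1 / Real.cosh 1 ^ 2 := by gcongr
        nlinarith
      have q2 : 1 - 1 / Real.cosh 1 ≤ 1 - 1 / Real.cosh x := by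
        have : 1 / Real.cosh x ≤ 1 / Real.cosh 1 := by gcongr
        linarith
      have q3 : 0 ≤ 1 - 1 / Real.cosh 1 := by
        rw [sub_nonneg, div_le_one hC1]; exact hone
      refine (mul_le_mul q1 q2 q3 hT.le).trans ?_
      have : x * (1 - Real.tanh x ^ 2) ≤ Real.tanh x * (1 / Real.cosh x) := by
        rw [hS, Real.tanh_eq_sinh_div_cosh]
        have : Real.sinh x / Real.cosh x * (1 / Real.cosh x) = Real.sinh x * (1 / Real.cosh x ^ 2) := by
          field_simp
        rw [this]; gcongr
      linarith
    have d0 : 0 ≤ (1 - 1 / Real.cosh 1 ^ 2) * (1 - 1 / Real.cosh 1) := by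
      apply mul_nonneg
      · rw [sub_nonneg, div_le_one (by positivity)]; nlinarith
      · rw [sub_nonneg, div_le_one hC1]; exact hone
    have hJ : x * (1 + x ^ 2) ^ (-(5 : ℝ) / 4) ≤ 1 / (x * √x) := by
      have r1 : (1 + x ^ 2) ^ (-(5 : ℝ) / 4) ≤ (x ^ 2) ^ (-(5 : ℝ) / 4) :=
        Real.rpow_le_rpow_of_nonpos (by positivity) (by linarith) (by norm_num)
      have r2 : (x ^ 2) ^ (-(5 : ℝ) / 4) = x ^ (-(5 : ℝ) / 2) := by
        rw [← Real.rpow_natCast, ← Real.rpow_mul hx.le]; norm_num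
      have r3 : 1 / (x * √x) = x * x ^ (-(5 : ℝ) / 2) := by
        rw [Real.sqrt_eq_rpow]
        have : x * x ^ (-(5 : ℝ) / 2) = x ^ (-(3 : ℝ) / 2) := by
          nth_rewrite 1 [← Real.rpow_one x]
          rw [← Real.rpow_add hx]; norm_num
        rw [this]
        have : x * x ^ ((1 : ℝ) / 2) = x ^ ((3 : ℝ) / 2) := by
          nth_rewrite 1 [← Real.rpow_one x]
          rw [← Real.rpow_add hx]; norm_num
        rw [this, one_div, ← Real.rpow_neg hx.le]; norm_num
      rw [r3, ← r2]
      gcongr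
    have hgx : mG x ≤ x := by unfold mG; nlinarith
    calc _ ≤ (1 / 4 * ((1 - 1 / Real.cosh 1 ^ 2) * (1 - 1 / Real.cosh 1)) ^ 2) * (1 / (x * √x)) := by
          gcongr; exact min_le_right _ _
      _ ≤ (1 / 4 * (Real.tanh x - x * (1 - Real.tanh x ^ 2)) ^ 2) * (1 / (x * √x)) := by
          gcongr
      _ = ((Real.tanh x - x * (1 - Real.tanh x ^ 2)) ^ 2) / (4 * x * √x) := by
          field_simp
      _ ≤ - mB x := by
          unfold mB
          rw [← neg_div, neg_neg]
          gcongr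
          have : 0 ≤ 4 * x ^ 2 * Real.tanh x ^ 2 * (1 - Real.tanh x ^ 2) := by positivity
          linarith

lemma mB_lower_loc : ∃ c : ℝ, 0 < c ∧ ∀ L x : ℝ, 0 < L → L / 2 ≤ x → x ≤ 2 * L →
    c * (L * (1 + L ^ 2) ^ (-(5 : ℝ) / 4)) ≤ - mB x := by
  obtain ⟨c, hc, h⟩ := mB_lower
  refine ⟨c * (1 / 2 * 4 ^ (-(5 : ℝ) / 4)), by positivity, ?_⟩
  intro L x hL h1 h2
  refine le_trans ?_ (h x (by linarith))
  have e : (4 * (1 + L ^ 2)) ^ (-(5 : ℝ) / 4) ≤ (1 + x ^ 2) ^ (-(5 : ℝ) / 4) :=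
    Real.rpow_le_rpow_of_nonpos (by positivity) (by nlinarith) (by norm_num)
  rw [Real.mul_rpow (by norm_num) (by positivity)] at e
  calc _ = c * ((L / 2) * (4 ^ (-(5 : ℝ) / 4) * (1 + L ^ 2) ^ (-(5 : ℝ) / 4))) := by ring
    _ ≤ _ := by
      have hx0 : 0 ≤ x := by linarith
      gcongr

def bd (μ t lam : ℝ) : ℝ := μ ^ (-(1 : ℝ) / 2) * |t| ^ (-(1 : ℝ) / 2) *
                lam ^ (-(1 : ℝ) / 2) * jap (Real.sqrt μ * lam) ^ ((5 : ℝ) / 4)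

lemma kappa_eq {c μ t lam : ℝ} (hc : 0 < c) (hμ : 0 < μ) (ht : t ≠ 0) (hl : 0 < lam) :
    1 / √(|t| * √μ * (c * (√μ * lam * (1 + (√μ * lam) ^ 2) ^ (-(5 : ℝ) / 4)))) =
      c ^ (-(1 : ℝ) / 2) * bd μ t lam := by
  have ht' : 0 < |t| := abs_pos.2 ht
  have hJ : 0 < 1 + (√μ * lam) ^ 2 := by positivity
  have e1 : |t| * √μ * (c * (√μ * lam * (1 + (√μ * lam) ^ 2) ^ (-(5 : ℝ) / 4))) =
      c * (μ * |t| * lam * (1 + (√μ * lam) ^ 2) ^ (-(5 : ℝ) / 4)) := by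
    have := Real.mul_self_sqrt hμ.le
    linear_combination (|t| * c * lam * (1 + (√μ * lam) ^ 2) ^ (-(5 : ℝ) / 4)) * this
  rw [e1, Real.sqrt_eq_rpow, one_div, ← Real.rpow_neg (by positivity), bd, jap]
  rw [Real.mul_rpow (by positivity) (by positivity), Real.mul_rpow (by positivity) (by positivity),
    Real.mul_rpow (by positivity) (by positivity), Real.mul_rpow (by positivity) (by positivity),
    ← Real.rpow_mul hJ.le, ← Real.rpow_mul hJ.le]
  norm_num

lemma half_neg (χ : ℝ → ℝ) (hχ : ContDiff ℝ (⊤ : ℕ∞) χ)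
    (hsupp : Function.support χ ⊆ Set.Ioo (-2 : ℝ) 2) :
    ∃ C : ℝ, 0 < C ∧ ∀ μ lam t z : ℝ, 0 < μ → 0 < lam → t < 0 →
      ‖∫ ξ in (lam / 2)..(2 * lam), Complex.exp (Complex.I *
        ((t / √μ * m1 (√μ * ξ) + z * ξ : ℝ) : ℂ)) * ((χ (ξ / lam) - χ (2 * ξ / lam) : ℝ) : ℂ)‖
      ≤ C * bd μ t lam := by
  obtain ⟨c, hc, hlow⟩ := mB_lower_loc
  have hcs : HasCompactSupport χ := by
    apply HasCompactSupport.of_support_subset_isCompact (isCompact_Icc (a := (-2 : ℝ)) (b := 2))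
    exact hsupp.trans Set.Ioo_subset_Icc_self
  have hdc : Continuous (deriv χ) := hχ.continuous_deriv (by simp)
  have hdiff : ∀ x, HasDerivAt χ (deriv χ x) x := fun x =>
    ((hχ.differentiable (by simp)) x).hasDerivAt
  obtain ⟨K0, hK0⟩ := hcs.deriv.exists_bound_of_continuous hdc
  set K := K0 + 1 with hKdef
  have hK0' : 0 ≤ K0 := (norm_nonneg _).trans (hK0 0)
  have hK : ∀ x, |deriv χ x| ≤ K := fun x => (hK0 x).trans (by linarith)
  have hKpos : 0 < K := by linarith
  have z2 : χ 2 = 0 := by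
    by_contra h; have := (hsupp h).2; linarith
  have z4 : χ 4 = 0 := by
    by_contra h; have := (hsupp h).2; linarith
  refine ⟨27 * K * c ^ (-(1 : ℝ) / 2), by positivity, ?_⟩
  intro μ lam t z hμ hl ht
  have hs : 0 < √μ := Real.sqrt_pos.2 hμ
  have hpos : ∀ x ∈ Set.Icc (lam / 2) (2 * lam), 0 < √μ * x := fun x hx =>
    mul_pos hs (by linarith [hx.1])
  have hlin : ∀ x : ℝ, HasDerivAt (fun x => √μ * x) (√μ) x := fun x => by
    simpa using (hasDerivAt_id x).const_mul (√μ)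
  have ht' : 0 < |t| := abs_pos.2 ht.ne
  have key := vc_amp (a := lam / 2) (b := 2 * lam)
    (κ := |t| * √μ * (c * (√μ * lam * (1 + (√μ * lam) ^ 2) ^ (-(5 : ℝ) / 4))))
    (D := 3 * K / lam)
    (φ := fun ξ => t / √μ * m1 (√μ * ξ) + z * ξ)
    (φ1 := fun ξ => t * mA (√μ * ξ) + z)
    (φ2 := fun ξ => t * (mB (√μ * ξ) * √μ))
    (ψ := fun ξ => χ (ξ / lam) - χ (2 * ξ / lam))
    (ψ1 := fun ξ => deriv χ (ξ / lam) * (1 / lam) - deriv χ (2 * ξ / lam) * (2 / lam))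
    (by linarith) (by positivity)
    (fun x hx => by
      refine HasDerivAt.congr_deriv ((((hasDerivAt_m1 (hpos x hx)).comp x (hlin x)).const_mul
        (t / √μ)).add ((hasDerivAt_id x).const_mul z)) ?_
      field_simp)
    (fun x hx =>
      (((hasDerivAt_mA (hpos x hx)).comp x (hlin x)).const_mul t).add_const z)
    (by
      have : ContinuousOn (fun ξ => mB (√μ * ξ)) (Set.Icc (lam / 2) (2 * lam)) :=
        continuousOn_mB.comp (by fun_prop) hpos
      fun_prop)
    (fun x hx => by
      have := hlow (√μ * lam) (√μ * x) (by positivity) (by nlinarith [hx.1]) (by nlinarith [hx.2])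
      have h2 : t * (mB (√μ * x) * √μ) = |t| * √μ * (- mB (√μ * x)) := by
        rw [abs_of_neg ht]; ring
      show _ ≤ t * (mB (√μ * x) * √μ)
      rw [h2]
      gcongr)
    (fun x => by
      have d1 : HasDerivAt (fun x => x / lam) (1 / lam) x := (hasDerivAt_id x).div_const lam
      have d2 : HasDerivAt (fun x => 2 * x / lam) (2 / lam) x := by
        simpa using ((hasDerivAt_id x).const_mul 2).div_const lam
      exact ((hdiff _).comp x d1).sub ((hdiff _).comp x d2))
    (by fun_prop)
    (fun x => by
      have a1 := hK (x / lam)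
      have a2 := hK (2 * x / lam)
      refine (abs_sub _ _).trans ?_
      rw [abs_mul, abs_mul, abs_of_pos (show 0 < 1 / lam by positivity),
        abs_of_pos (show 0 < 2 / lam by positivity)]
      have : 3 * K / lam = K * (1 / lam) + K * (2 / lam) := by ring
      rw [this]
      gcongr)
    (by
      have e1 : 2 * lam / lam = 2 := by field_simp
      have e2 : 2 * (2 * lam) / lam = 4 := by field_simp; norm_num
      simp only [e1, e2, z2, z4, sub_zero])
  refine key.trans (le_of_eq ?_)
  have hk := kappa_eq hc hμ ht.ne hl
  rw [show (6 : ℝ) / √(|t| * √μ * (c * (√μ * lam * (1 + (√μ * lam) ^ 2) ^ (-(5 : ℝ) / 4)))) =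
    6 * (1 / √(|t| * √μ * (c * (√μ * lam * (1 + (√μ * lam) ^ 2) ^ (-(5 : ℝ) / 4))))) by ring, hk]
  field_simp
  ring

lemma half_bound (χ : ℝ → ℝ) (hχ : ContDiff ℝ (⊤ : ℕ∞) χ)
    (hsupp : Function.support χ ⊆ Set.Ioo (-2 : ℝ) 2) :
    ∃ C : ℝ, 0 < C ∧ ∀ μ lam t z : ℝ, 0 < μ → 0 < lam → t ≠ 0 →
      ‖∫ ξ in (lam / 2)..(2 * lam), Complex.exp (Complex.I *
        ((t / √μ * m1 (√μ * ξ) + z * ξ : ℝ) : ℂ)) * ((χ (ξ / lam) - χ (2 * ξ / lam) : ℝ) : ℂ)‖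
      ≤ C * bd μ t lam := by
  obtain ⟨C, hC, h⟩ := half_neg χ hχ hsupp
  refine ⟨C, hC, ?_⟩
  intro μ lam t z hμ hl ht
  rcases lt_or_gt_of_ne ht with ht | ht
  · exact h μ lam t z hμ hl ht
  · have := h μ lam (-t) (-z) hμ hl (by linarith)
    have hb : bd μ (-t) lam = bd μ t lam := by simp [bd]
    rw [hb] at this
    refine le_trans (le_of_eq ?_) this
    rw [← Complex.norm_conj]
    congr 1
    rw [intervalIntegral, intervalIntegral, map_sub, ← integral_conj, ← integral_conj]
    have : ∀ ξ : ℝ, (starRingEnd ℂ) (Complex.exp (Complex.I *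
        ((t / √μ * m1 (√μ * ξ) + z * ξ : ℝ) : ℂ)) * ((χ (ξ / lam) - χ (2 * ξ / lam) : ℝ) : ℂ)) =
        Complex.exp (Complex.I *
        ((-t / √μ * m1 (√μ * ξ) + -z * ξ : ℝ) : ℂ)) * ((χ (ξ / lam) - χ (2 * ξ / lam) : ℝ) : ℂ) := by
      intro ξ
      rw [map_mul, ← Complex.exp_conj, map_mul, Complex.conj_I, Complex.conj_ofReal,
        Complex.conj_ofReal]
      congr 2
      push_cast
      ring
    simp_rw [this]

lemma split_half {a b : ℝ} (ha : 0 ≤ a) (hab : a ≤ b) {h : ℝ → ℂ} (hi : Integrable h)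
    (h1 : ∀ x, |x| ≤ a → h x = 0) (h2 : ∀ x, b < |x| → h x = 0) :
    ∫ x, h x = (∫ x in a..b, h x) + ∫ x in a..b, h (-x) := by
  have gen : ∀ k : ℝ → ℂ, (∀ x, |x| ≤ a → k x = 0) → (∀ x, b < |x| → k x = 0) →
      ∫ x in Set.Ioi (0 : ℝ), k x = ∫ x in a..b, k x := by
    intro k k1 k2
    rw [intervalIntegral.integral_of_le hab]
    apply setIntegral_eq_of_subset_of_forall_sdiff_eq_zero measurableSet_Ioi
    · intro x hx; exact lt_of_le_of_lt ha hx.1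
    · intro x hx
      have hx0 : 0 < x := hx.1
      by_cases hxa : x ≤ a
      · exact k1 x (by rwa [abs_of_pos hx0])
      · by_cases hxb : x ≤ b
        · exact absurd ⟨not_le.1 hxa, hxb⟩ hx.2
        · exact k2 x (by rw [abs_of_pos hx0]; exact not_le.1 hxb)
  have e1 := gen h h1 h2
  have e2 := gen (fun x => h (-x)) (fun x hx => h1 _ (by rwa [abs_neg]))
    (fun x hx => h2 _ (by rwa [abs_neg]))
  rw [← e1, ← e2, integral_comp_neg_Ioi, neg_zero, add_comm]
  exact (intervalIntegral.integral_Iic_add_Ioi hi.integrableOn hi.integrableOn).symm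

lemma measurable_m1 : Measurable m1 := by
  have hT : Continuous Real.tanh :=
    continuous_iff_continuousAt.2 fun x => (hasDerivAt_tanh' x).continuousAt
  unfold m1
  refine Measurable.ite (measurableSet_singleton (0 : ℝ)) measurable_const ?_
  have h1 : Measurable fun ξ : ℝ => Real.tanh |ξ| := hT.measurable.comp continuous_abs.measurable
  have h2 : Measurable fun ξ : ℝ => |ξ| := continuous_abs.measurable
  exact measurable_id.mul (h1.div h2).sqrt

/-- the cutoff -/
def cutB (χ : ℝ → ℝ) (lam : ℝ) (ξ : ℝ) : ℂ := ((χ (|ξ| / lam) - χ (2 * |ξ| / lam) : ℝ) : ℂ)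

lemma cutB_small {χ : ℝ → ℝ} (hone : ∀ s ∈ Set.Icc (-1 : ℝ) 1, χ s = 1) {lam : ℝ} (hl : 0 < lam)
    (ξ : ℝ) (h : |ξ| ≤ lam / 2) : cutB χ lam ξ = 0 := by
  have h0 := abs_nonneg ξ
  have e1 : χ (|ξ| / lam) = 1 := hone _ ⟨by linarith [div_nonneg h0 hl.le], by
    rw [div_le_one hl]; linarith⟩
  have e2 : χ (2 * |ξ| / lam) = 1 := hone _ ⟨by
    linarith [div_nonneg (mul_nonneg zero_le_two h0) hl.le], by
    rw [div_le_one hl]; linarith⟩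
  simp [cutB, e1, e2]

lemma cutB_large {χ : ℝ → ℝ} (hsupp : Function.support χ ⊆ Set.Ioo (-2 : ℝ) 2)
    {lam : ℝ} (hl : 0 < lam)
    (ξ : ℝ) (h : 2 * lam < |ξ|) : cutB χ lam ξ = 0 := by
  have e1 : χ (|ξ| / lam) = 0 := by
    by_contra h'
    have := (hsupp h').2
    rw [div_lt_iff₀ hl] at this
    linarith
  have e2 : χ (2 * |ξ| / lam) = 0 := by
    by_contra h'
    have := (hsupp h').2
    rw [div_lt_iff₀ hl] at this
    linarith
  simp [cutB, e1, e2]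

lemma cutB_smooth {χ : ℝ → ℝ} (hχ : ContDiff ℝ (⊤ : ℕ∞) χ)
    (hone : ∀ s ∈ Set.Icc (-1 : ℝ) 1, χ s = 1) {lam : ℝ} (hl : 0 < lam) :
    ContDiff ℝ (⊤ : ℕ∞) (cutB χ lam) := by
  rw [contDiff_iff_contDiffAt]
  intro x
  by_cases hx : x = 0
  · have : cutB χ lam =ᶠ[nhds x] fun _ => 0 := by
      rw [hx]
      filter_upwards [Metric.ball_mem_nhds (0 : ℝ) (show 0 < lam / 2 by positivity)] with y hy
      rw [Metric.mem_ball, dist_zero_right, Real.norm_eq_abs] at hy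
      exact cutB_small hone hl y hy.le
    exact contDiffAt_const.congr_of_eventuallyEq this
  · have ha : ContDiffAt ℝ (⊤ : ℕ∞) (fun x : ℝ => |x|) x := contDiffAt_abs hx
    unfold cutB
    refine Complex.ofRealCLM.contDiff.contDiffAt.comp x ?_
    refine ContDiffAt.sub ?_ ?_
    · exact hχ.contDiffAt.comp x (ha.div_const lam)
    · exact hχ.contDiffAt.comp x ((contDiffAt_const.mul ha).div_const lam)

lemma cutB_compact {χ : ℝ → ℝ} (hsupp : Function.support χ ⊆ Set.Ioo (-2 : ℝ) 2)
    {lam : ℝ} (hl : 0 < lam) : HasCompactSupport (cutB χ lam) := by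
  apply HasCompactSupport.of_support_subset_isCompact
    (isCompact_Icc (a := -(2 * lam)) (b := 2 * lam))
  intro x hx
  by_contra h
  apply hx
  apply cutB_large hsupp hl
  by_contra h'
  exact h (abs_le.1 (not_lt.1 h'))

lemma kernel_integrable {χ : ℝ → ℝ} (hχ : ContDiff ℝ (⊤ : ℕ∞) χ)
    (hsupp : Function.support χ ⊆ Set.Ioo (-2 : ℝ) 2)
    (hone : ∀ s ∈ Set.Icc (-1 : ℝ) 1, χ s = 1) {lam : ℝ} (hl : 0 < lam) (μ t z : ℝ) :
    Integrable (fun ξ : ℝ => Complex.exp (Complex.I *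
        ((t / √μ * m1 (√μ * ξ) + z * ξ : ℝ) : ℂ)) * cutB χ lam ξ) := by
  have hB : Integrable (cutB χ lam) :=
    (cutB_smooth hχ hone hl).continuous.integrable_of_hasCompactSupport (cutB_compact hsupp hl)
  have hm : Measurable fun ξ : ℝ => t / √μ * m1 (√μ * ξ) + z * ξ := by
    have := measurable_m1
    fun_prop
  refine hB.bdd_mul (c := 1) ?_ (Filter.Eventually.of_forall fun ξ => (vc_norm_exp _).le)
  exact (Complex.measurable_exp.comp
    ((Complex.measurable_ofReal.comp hm).const_mul Complex.I)).aestronglyMeasurable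

lemma kernel_bound (χ : ℝ → ℝ) (hχ : ContDiff ℝ (⊤ : ℕ∞) χ)
    (hsupp : Function.support χ ⊆ Set.Ioo (-2 : ℝ) 2)
    (hone : ∀ s ∈ Set.Icc (-1 : ℝ) 1, χ s = 1) :
    ∃ C : ℝ, 0 < C ∧ ∀ μ lam t z : ℝ, 0 < μ → 0 < lam → t ≠ 0 →
      ‖∫ ξ : ℝ, Complex.exp (Complex.I *
        ((t / √μ * m1 (√μ * ξ) + z * ξ : ℝ) : ℂ)) * cutB χ lam ξ‖
      ≤ C * bd μ t lam := by
  obtain ⟨C, hC, h⟩ := half_bound χ hχ hsupp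
  refine ⟨2 * C, by positivity, ?_⟩
  intro μ lam t z hμ hl ht
  rw [split_half (a := lam / 2) (b := 2 * lam) (by positivity) (by linarith)
    (kernel_integrable hχ hsupp hone hl μ t z)
    (fun x hx => by rw [cutB_small hone hl x hx, mul_zero])
    (fun x hx => by rw [cutB_large hsupp hl x hx, mul_zero])]
  have b1 := h μ lam t z hμ hl ht
  have b2 := h μ lam (-t) (-z) hμ hl (neg_ne_zero.2 ht)
  have hb : bd μ (-t) lam = bd μ t lam := by simp [bd]
  rw [hb] at b2
  have e1 : ∫ ξ in (lam / 2)..(2 * lam), Complex.exp (Complex.I *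
        ((t / √μ * m1 (√μ * ξ) + z * ξ : ℝ) : ℂ)) * cutB χ lam ξ =
      ∫ ξ in (lam / 2)..(2 * lam), Complex.exp (Complex.I *
        ((t / √μ * m1 (√μ * ξ) + z * ξ : ℝ) : ℂ)) * ((χ (ξ / lam) - χ (2 * ξ / lam) : ℝ) : ℂ) := by
    apply intervalIntegral.integral_congr
    intro ξ hξ
    rw [Set.uIcc_of_le (by linarith)] at hξ
    have : 0 ≤ ξ := by linarith [hξ.1]
    simp only [cutB, abs_of_nonneg this]
  have e2 : ∫ ξ in (lam / 2)..(2 * lam), Complex.exp (Complex.I *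
        ((t / √μ * m1 (√μ * (-ξ)) + z * (-ξ) : ℝ) : ℂ)) * cutB χ lam (-ξ) =
      ∫ ξ in (lam / 2)..(2 * lam), Complex.exp (Complex.I *
        ((-t / √μ * m1 (√μ * ξ) + -z * ξ : ℝ) : ℂ)) * ((χ (ξ / lam) - χ (2 * ξ / lam) : ℝ) : ℂ) := by
    apply intervalIntegral.integral_congr
    intro ξ hξ
    rw [Set.uIcc_of_le (by linarith)] at hξ
    have : 0 ≤ ξ := by linarith [hξ.1]
    have e : t / √μ * m1 (√μ * (-ξ)) + z * (-ξ) = -t / √μ * m1 (√μ * ξ) + -z * ξ := by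
      rw [mul_neg, m1_neg]; ring
    simp only [cutB, abs_neg, abs_of_nonneg this, e]
  rw [e1, e2]
  refine (norm_add_le _ _).trans ?_
  linarith

lemma fourier_dual {f g : ℝ → ℂ} (hf : Integrable f) (hg : Integrable g) :
    ∫ ξ, 𝓕 f ξ * g ξ = ∫ x, f x * 𝓕 g x := by
  have := VectorFourier.integral_fourierIntegral_smul_eq_flip (L := innerₗ ℝ) (μ := volume)
    (ν := volume) (e := Real.fourierChar) Real.continuous_fourierChar continuous_inner hf hg
  simpa [flip_innerₗ] using! this

lemma prop_eq {χ : ℝ → ℝ} (hχ : ContDiff ℝ (⊤ : ℕ∞) χ)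
    (hsupp : Function.support χ ⊆ Set.Ioo (-2 : ℝ) 2)
    (hone : ∀ s ∈ Set.Icc (-1 : ℝ) 1, χ s = 1) {lam : ℝ} (hl : 0 < lam) (μ t : ℝ) (f : 𝓢(ℝ, ℂ))
    (x : ℝ) : prop1 μ t (proj1 χ lam ⇑f) x = ∫ y, f y * ∫ ξ : ℝ, Complex.exp (Complex.I *
        ((t / √μ * m1 (√μ * ξ) + (2 * Real.pi * (x - y)) * ξ : ℝ) : ℂ)) * cutB χ lam ξ := by
  have hsm : ContDiff ℝ (⊤ : ℕ∞) (fun ξ => cutB χ lam ξ * 𝓕 f ξ) :=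
    (cutB_smooth hχ hone hl).mul ((𝓕 f).smooth _)
  have hcp : HasCompactSupport (fun ξ => cutB χ lam ξ * 𝓕 f ξ) :=
    (cutB_compact hsupp hl).mul_right
  have hinv : 𝓕 (proj1 χ lam ⇑f) = fun ξ => cutB χ lam ξ * 𝓕 (⇑f) ξ := by
    have h := FourierTransform.fourier_fourierInv_eq (E := 𝓢(ℝ, ℂ)) (F := 𝓢(ℝ, ℂ)) (hcp.toSchwartzMap hsm)
    have h' := congrArg (fun F : 𝓢(ℝ, ℂ) => (F : ℝ → ℂ)) h
    simp only [SchwartzMap.fourier_coe, SchwartzMap.fourierInv_coe] at h'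
    exact h'
  rw [prop1, hinv, Real.fourierInv_eq']
  have hg := kernel_integrable hχ hsupp hone hl μ t (2 * Real.pi * x)
  have hd := fourier_dual f.integrable hg
  have e1 : ∀ v : ℝ, Complex.exp (((2 * Real.pi * inner ℝ v x : ℝ) : ℂ) * Complex.I) •
      (Complex.exp (Complex.I * ((t / √μ) * m1 (√μ * v) : ℝ)) * (cutB χ lam v * 𝓕 (⇑f) v)) =
      𝓕 (⇑f) v * (Complex.exp (Complex.I *
        ((t / √μ * m1 (√μ * v) + (2 * Real.pi * x) * v : ℝ) : ℂ)) * cutB χ lam v) := by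
    intro v
    have : Complex.exp (Complex.I * ((t / √μ * m1 (√μ * v) + (2 * Real.pi * x) * v : ℝ) : ℂ)) =
      Complex.exp (((2 * Real.pi * inner ℝ v x : ℝ) : ℂ) * Complex.I) *
        Complex.exp (Complex.I * ((t / √μ) * m1 (√μ * v) : ℝ)) := by
      rw [← Complex.exp_add]
      congr 1
      simp
      ring
    rw [this, smul_eq_mul]
    ring
  rw [integral_congr_ae (Filter.Eventually.of_forall e1), hd]
  congr 1
  funext y
  congr 1
  rw [Real.fourier_eq']
  congr 1
  funext v
  rw [smul_eq_mul, ← mul_assoc, ← Complex.exp_add]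
  congr 2
  simp
  ring

theorem dispersive_decay_1d (χ : ℝ → ℝ) (hχ : ContDiff ℝ (⊤ : ℕ∞) χ)
    (hsupp : Function.support χ ⊆ Set.Ioo (-2 : ℝ) 2)
    (hone : ∀ s ∈ Set.Icc (-1 : ℝ) 1, χ s = 1) :
    ∃ C : ℝ, 0 < C ∧
      ∀ μ : ℝ, 0 < μ → μ ≤ 1 →
        ∀ lam : ℝ, 0 < lam → ∀ t : ℝ, t ≠ 0 → ∀ f : 𝓢(ℝ, ℂ),
          eLpNorm (prop1 μ t (proj1 χ lam ⇑f)) ⊤ volume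
            ≤ ENNReal.ofReal (C * μ ^ (-(1 : ℝ) / 2) * |t| ^ (-(1 : ℝ) / 2) *
                lam ^ (-(1 : ℝ) / 2) * jap (Real.sqrt μ * lam) ^ ((5 : ℝ) / 4)) *
              eLpNorm (⇑f) 1 volume := by
  obtain ⟨C, hC, h⟩ := kernel_bound χ hχ hsupp hone
  refine ⟨C, hC, ?_⟩
  intro μ hμ _ lam hl t ht f
  have hb : C * μ ^ (-(1 : ℝ) / 2) * |t| ^ (-(1 : ℝ) / 2) *
      lam ^ (-(1 : ℝ) / 2) * jap (Real.sqrt μ * lam) ^ ((5 : ℝ) / 4) = C * bd μ t lam := by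
    rw [bd]; ring
  rw [hb, eLpNorm_exponent_top, eLpNorm_one_eq_lintegral_enorm]
  apply eLpNormEssSup_le_of_ae_enorm_bound
  refine Filter.Eventually.of_forall fun x => ?_
  rw [prop_eq hχ hsupp hone hl]
  refine (enorm_integral_le_lintegral_enorm _).trans ?_
  rw [← lintegral_const_mul _ f.continuous.enorm.measurable]
  refine lintegral_mono fun y => ?_
  rw [enorm_mul, mul_comm]
  gcongr
  rw [← ofReal_norm]
  exact ENNReal.ofReal_le_ofReal (h μ lam t _ hμ hl ht)
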